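/- arXiv:math/0606374 — 2 statements merged into one kernel-verified Lean document; each statement's English description precedes it below -/
import Mathlib

section
/- Let Q : W → V be a quadratic map between F₂-vector spaces with associated bilinear map B, and let P : V × W → V be an F₂-bilinear map satisfying P(Q(x), y) = B(x,y) + P(B(x,y), x) for all x, y ∈ W. Then P(B(x,y), z) + P(B(y,z), x) + P(B(z,x), y) = 0 for all x, y, z ∈ W. -/
/-- The polarization (associated bilinear map) of a map `Q`:
`B(x,y) = Q(x+y) + Q(x) + Q(y)`. -/
def qpolar {W V : Type*} [Add W] [Add V] (Q : W → V) (x y : W) : V :=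
  Q (x + y) + Q x + Q y

/-- `Q` is a quadratic map between `F₂`-vector spaces: its polarization is `F₂`-bilinear. -/
def IsQuadraticMap {W V : Type*} [AddCommGroup W] [Module (ZMod 2) W]
    [AddCommGroup V] [Module (ZMod 2) V] (Q : W → V) : Prop :=
  (∀ x y z : W, qpolar Q (x + y) z = qpolar Q x z + qpolar Q y z) ∧
  (∀ x y z : W, qpolar Q x (y + z) = qpolar Q x y + qpolar Q x z)

/-! Write `B` for the polarization of `Q`. Expanding `P (Q (x + y)) z` once with the hypothesis on
`P` and once with `Q (x + y) = Q x + Q y + B x y`, everything cancels except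
`P (B x y) z = P (B y z) x + P (B z x) y`. Adding the three cyclic rotations of this equation gives
`S = S + S` for the cyclic sum `S`, whence `S = 0`. Nothing here depends on the characteristic once
`B x y` is written as `Q (x + y) - Q x - Q y`. -/

theorem qpolar_eq_polar {W V : Type*} [AddCommGroup W] [AddCommGroup V] [Module (ZMod 2) V]
    (Q : W → V) : qpolar Q = QuadraticMap.polar Q := by
  funext x y
  simp only [qpolar, QuadraticMap.polar, ZModModule.sub_eq_add]

section CyclicIdentity

open QuadraticMap (polar polar_comm)

variable {R W V : Type*} [CommSemiring R] [AddCommGroup W] [Module R W]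
  [AddCommGroup V] [Module R V] {Q : W → V} {P : V →ₗ[R] W →ₗ[R] V}

theorem apply_polar_eq_add (hQ : ∀ x y z, polar Q (x + y) z = polar Q x z + polar Q y z)
    (hP : ∀ x y, P (Q x) y = polar Q x y + P (polar Q x y) x) (x y z : W) :
    P (polar Q x y) z = P (polar Q y z) x + P (polar Q z x) y :=
  calc
    P (polar Q x y) z = P (Q (x + y)) z - P (Q x) z - P (Q y) z := by
      simp only [polar, map_sub, LinearMap.sub_apply]
    _ = P (polar Q y z) x + P (polar Q x z) y := by
      simp only [hP, hQ, map_add, LinearMap.add_apply]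
      abel
    _ = P (polar Q y z) x + P (polar Q z x) y := by rw [polar_comm Q x z]

theorem cyclic_identity_general (hQ : ∀ x y z, polar Q (x + y) z = polar Q x z + polar Q y z)
    (hP : ∀ x y, P (Q x) y = polar Q x y + P (polar Q x y) x) (x y z : W) :
    P (polar Q x y) z + P (polar Q y z) x + P (polar Q z x) y = 0 := by
  have rotation := apply_polar_eq_add hQ hP
  linear_combination (norm := abel) -rotation x y z - rotation y z x - rotation z x y

end CyclicIdentity

/-- If `P` is bilinear and satisfies `P(Q(x),y) = B(x,y) + P(B(x,y),x)`,
then `P(B(x,y),z) + P(B(y,z),x) + P(B(z,x),y) = 0`. -/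
theorem cyclic_identity {W V : Type*} [AddCommGroup W] [Module (ZMod 2) W]
    [AddCommGroup V] [Module (ZMod 2) V]
    (Q : W → V) (hQ : IsQuadraticMap Q)
    (P : V →ₗ[ZMod 2] W →ₗ[ZMod 2] V)
    (hP : ∀ x y : W, P (Q x) y = qpolar Q x y + P (qpolar Q x y) x) :
    ∀ x y z : W, P (qpolar Q x y) z + P (qpolar Q y z) x + P (qpolar Q z x) y = 0 := by
  simp only [IsQuadraticMap, qpolar_eq_polar] at hQ hP ⊢
  exact cyclic_identity_general hQ.1 hP
end

section
/- Let q ∈ F₂[x₁,…,x_m] be a homogeneous polynomial of degree 2. Then q is a product of two homogeneous linear forms if and only if there exists a homogeneous linear form ℓ ∈ F₂[x₁,…,x_m] with β(q) = ℓ·q. Moreover, if q = uv with u, v homogeneous linear forms, then β(q) = (u+v)·q. -/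
open MvPolynomial

/-- The Bockstein operator: the unique `F₂`-derivation of `F₂[x₁,…,x_m]`
with `β(x_i) = x_i²`, given by `β(f) = Σ_i x_i² ∂f/∂x_i`. -/
noncomputable def bockstein {m : ℕ} (f : MvPolynomial (Fin m) (ZMod 2)) :
    MvPolynomial (Fin m) (ZMod 2) :=
  ∑ i : Fin m, X i ^ 2 * pderiv i f

/-!
Since `β` squares each variable and squaring is `F₂`-linear, `β(u) = u²` for every linear form `u`,
and the Leibniz rule gives `β(uv) = (u + v)uv`.

Conversely, `β` commutes with each `∂ₖ`, so applying `∂ₖ` to `β(q) = ℓq` gives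
`(∂ₖq)² = (∂ₖℓ)q + ℓ∂ₖq`, where by degree `ℓ` may be taken to be a linear form. If
`ℓ ≠ 0`, some `∂ₖℓ = 1`, and then `q = ∂ₖq(∂ₖq + ℓ)`. If `ℓ = 0`, all `∂ₖq` vanish, so `q` is a
polynomial in the `xᵢ²`, which over `F₂` makes it a square.
-/

lemma mkDerivation_eq_sum_mul_pderiv {σ R : Type*} [CommSemiring R] [Fintype σ]
    (f : σ → MvPolynomial σ R) (g : MvPolynomial σ R) :
    mkDerivation R f g = ∑ i, f i * pderiv i g := by
  classical
  have hderivation : mkDerivation R f = ∑ i, f i • pderiv i :=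
    derivation_ext fun j => by
      rw [mkDerivation_X, ← Derivation.coeFnAddMonoidHom_apply, map_sum]
      simp [pderiv_X, Pi.single_apply]
  rw [hderivation, ← Derivation.coeFnAddMonoidHom_apply, map_sum]
  simp

section HomogeneousPolynomials

variable {σ R : Type*} [CommSemiring R]

lemma isHomogeneous_of_isHomogeneous_expand {p n : ℕ} (hp : p ≠ 0) {f : MvPolynomial σ R}
    (hf : (expand p f).IsHomogeneous (p * n)) : f.IsHomogeneous n := by
  intro d hd
  rw [← coeff_expand_smul p hp] at hd
  have hweight := hf hd
  rw [map_nsmul, smul_eq_mul] at hweight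
  exact Nat.eq_of_mul_eq_mul_left (Nat.pos_of_ne_zero hp) hweight

lemma exists_isHomogeneous_eq_mul_of_dvd {m n : ℕ} {f g : MvPolynomial σ R}
    (hf : f.IsHomogeneous (m + n)) (hg : g.IsHomogeneous n) (h : g ∣ f) :
    ∃ e : MvPolynomial σ R, e.IsHomogeneous m ∧ f = e * g := by
  let : GradedAlgebra (homogeneousSubmodule σ R) := gradedAlgebra
  obtain ⟨e, rfl⟩ := h
  rw [mul_comm] at hf ⊢
  refine ⟨_, (DirectSum.decompose (homogeneousSubmodule σ R) e m).2, ?_⟩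
  rw [← DirectSum.coe_decompose_mul_add_of_right_mem _ hg, DirectSum.decompose_of_mem_same _ hf]

lemma isHomogeneous_mkDerivation {n k : ℕ} {f : σ → MvPolynomial σ R}
    (hf : ∀ i, (f i).IsHomogeneous (k + 1)) {g : MvPolynomial σ R} (hg : g.IsHomogeneous n) :
    (mkDerivation R f g).IsHomogeneous (n + k) := by
  rw [g.as_sum, map_sum]
  refine IsHomogeneous.sum _ _ _ fun d hd => ?_
  rw [mkDerivation_monomial]
  refine Submodule.smul_mem (homogeneousSubmodule σ R (n + k)) _
    (IsHomogeneous.sum _ _ _ fun i hi => ?_)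
  have hle : Finsupp.single i 1 ≤ d :=
    Finsupp.single_le_iff.2 (Nat.one_le_iff_ne_zero.2 (Finsupp.mem_support_iff.1 hi))
  have hdegree : (d - Finsupp.single i 1).degree + 1 = n := by
    calc (d - Finsupp.single i 1).degree + 1
        = (d - Finsupp.single i 1 + Finsupp.single i 1).degree := by
          rw [map_add, Finsupp.degree_single]
      _ = d.degree := by rw [tsub_add_cancel_of_le hle]
      _ = n := (hg.degree_eq_sum_deg_support hd).symm
  rw [← hdegree, add_assoc, add_comm 1 k]
  exact (isHomogeneous_monomial _ rfl).mul (hf i)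

lemma pderiv_eq_C_of_isHomogeneous_one {u : MvPolynomial σ R} (hu : u.IsHomogeneous 1) (i : σ) :
    pderiv i u = C (coeff (Finsupp.single i 1) u) := by
  have hconst : (pderiv i u).IsHomogeneous 0 := hu.pderiv
  rw [totalDegree_eq_zero_iff_eq_C.1 ((totalDegree_zero_iff_isHomogeneous σ).2 hconst),
    coeff_pderiv]
  simp

lemma exists_coeff_single_ne_zero_of_isHomogeneous_one {u : MvPolynomial σ R}
    (hu : u.IsHomogeneous 1) (hu₀ : u ≠ 0) : ∃ i, coeff (Finsupp.single i 1) u ≠ 0 := by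
  obtain ⟨d, hd⟩ := ne_zero_iff.1 hu₀
  have hdegree : d.degree = 1 := by_contra fun h => hd (hu.coeff_eq_zero h)
  obtain ⟨i, rfl⟩ := Finsupp.range_single_one.symm.subset hdegree
  exact ⟨i, hd⟩

end HomogeneousPolynomials

section VanishingPartialDerivatives

variable {σ : Type*}

lemma mem_range_expand_of_forall_dvd {R : Type*} [CommSemiring R] {p : ℕ} {f : MvPolynomial σ R}
    (h : ∀ d ∈ f.support, ∀ i, p ∣ d i) : f ∈ (expand p (R := R) (σ := σ)).range := by
  rw [f.as_sum]
  refine sum_mem fun d hd => ⟨monomial (d.mapRange (· / p) (Nat.zero_div p)) (coeff d f), ?_⟩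
  have hd_eq : p • d.mapRange (· / p) (Nat.zero_div p) = d :=
    Finsupp.ext fun i => Nat.mul_div_cancel' (h d hd i)
  exact (expand_monomial p _ _).trans (by rw [hd_eq])

lemma dvd_of_mem_support_of_pderiv_eq_zero {R : Type*} [CommRing R] {p : ℕ} [CharP R p]
    (hp : p.Prime) {f : MvPolynomial σ R} {i : σ} (h : pderiv i f = 0) {d : σ →₀ ℕ}
    (hd : d ∈ f.support) : p ∣ d i := by
  by_contra hdvd
  have hpos : 1 ≤ d i := Nat.one_le_iff_ne_zero.2 fun h₀ => hdvd (h₀ ▸ dvd_zero p)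
  have hcoeff : coeff d f * (d i : R) = 0 := by
    have := coeff_pderiv f (d - Finsupp.single i 1) (i := i)
    rw [h, coeff_zero, tsub_add_cancel_of_le (Finsupp.single_le_iff.2 hpos), Finsupp.tsub_apply,
      Finsupp.single_eq_same, ← Nat.cast_add_one, Nat.sub_add_cancel hpos] at this
    exact this.symm
  have hunit : IsUnit (d i : R) := (CharP.isUnit_natCast_iff hp).2 hdvd
  exact mem_support_iff.1 hd (hunit.mul_left_eq_zero.1 hcoeff)

lemma exists_isHomogeneous_eq_pow_of_pderiv_eq_zero {p n : ℕ} [Fact p.Prime]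
    {f : MvPolynomial σ (ZMod p)} (hf : f.IsHomogeneous (p * n)) (h : ∀ i, pderiv i f = 0) :
    ∃ g : MvPolynomial σ (ZMod p), g.IsHomogeneous n ∧ f = g ^ p := by
  have hp : p.Prime := Fact.out
  obtain ⟨g, rfl⟩ := mem_range_expand_of_forall_dvd fun d hd i =>
    dvd_of_mem_support_of_pderiv_eq_zero hp (h i) hd
  exact ⟨g, isHomogeneous_of_isHomogeneous_expand hp.ne_zero hf, expand_zmod g⟩

end VanishingPartialDerivatives

section Bockstein

/-- The Bockstein `β` of `F₂[xᵢ : i ∈ σ]`, for a possibly infinite set `σ` of variables. It is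
bundled as a derivation so that its Lie bracket with `∂ₖ` can be computed on the variables. -/
noncomputable def bocksteinDerivation (σ : Type*) :
    Derivation (ZMod 2) (MvPolynomial σ (ZMod 2)) (MvPolynomial σ (ZMod 2)) :=
  mkDerivation (ZMod 2) fun i => X i ^ 2

variable {σ : Type*}

lemma bockstein_eq_bocksteinDerivation {m : ℕ} (f : MvPolynomial (Fin m) (ZMod 2)) :
    bockstein f = bocksteinDerivation (Fin m) f :=
  (mkDerivation_eq_sum_mul_pderiv _ f).symm

lemma isHomogeneous_bocksteinDerivation {n : ℕ} {f : MvPolynomial σ (ZMod 2)}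
    (hf : f.IsHomogeneous n) : (bocksteinDerivation σ f).IsHomogeneous (n + 1) :=
  isHomogeneous_mkDerivation (fun i => isHomogeneous_X_pow i 2) hf

lemma bocksteinDerivation_eq_sq {u : MvPolynomial σ (ZMod 2)} (hu : u.IsHomogeneous 1) :
    bocksteinDerivation σ u = u ^ 2 := by
  rw [← mem_homogeneousSubmodule, homogeneousSubmodule_one_eq_span_X] at hu
  induction hu using Submodule.span_induction with
  | mem _ hX =>
    obtain ⟨i, rfl⟩ := hX
    exact mkDerivation_X _ _ _
  | zero => simp
  | add v w _ _ hv hw => rw [map_add, hv, hw, CharTwo.add_sq]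
  | smul c v _ hv => rw [Derivation.map_smul, hv, smul_pow, ZMod.pow_card c]

lemma bocksteinDerivation_mul_eq {u v : MvPolynomial σ (ZMod 2)}
    (hu : u.IsHomogeneous 1) (hv : v.IsHomogeneous 1) :
    bocksteinDerivation σ (u * v) = (u + v) * (u * v) := by
  rw [Derivation.leibniz, bocksteinDerivation_eq_sq hu, bocksteinDerivation_eq_sq hv]
  simp only [smul_eq_mul]
  ring

lemma pderiv_bocksteinDerivation (k : σ) (f : MvPolynomial σ (ZMod 2)) :
    pderiv k (bocksteinDerivation σ f) = bocksteinDerivation σ (pderiv k f) := by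
  classical
  have hbracket : ⁅(pderiv k : Derivation (ZMod 2) _ _), bocksteinDerivation σ⁆ = 0 := by
    refine derivation_ext fun i => ?_
    have hsq : pderiv k (X i ^ 2 : MvPolynomial σ (ZMod 2)) = 0 := by
      simp [CharTwo.two_eq_zero]
    have hconst : bocksteinDerivation σ (pderiv k (X i)) = 0 := by
      rw [pderiv_X, Pi.single_apply]
      split_ifs <;> simp
    rw [Derivation.commutator_apply, hconst, bocksteinDerivation, mkDerivation_X, hsq]
    simp
  rw [← sub_eq_zero, ← Derivation.commutator_apply, hbracket, Derivation.zero_apply]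

variable {q ℓ : MvPolynomial σ (ZMod 2)}

lemma sq_pderiv_eq_of_bocksteinDerivation_eq_mul (hq : q.IsHomogeneous 2)
    (h : bocksteinDerivation σ q = ℓ * q) (k : σ) :
    pderiv k q ^ 2 = pderiv k ℓ * q + ℓ * pderiv k q := by
  rw [← bocksteinDerivation_eq_sq hq.pderiv, ← pderiv_bocksteinDerivation, h, pderiv_mul]

lemma eq_mul_of_bocksteinDerivation_eq_mul_of_pderiv_eq_one (hq : q.IsHomogeneous 2)
    (h : bocksteinDerivation σ q = ℓ * q) {k : σ} (hk : pderiv k ℓ = 1) :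
    q = pderiv k q * (pderiv k q + ℓ) := by
  have hsq := sq_pderiv_eq_of_bocksteinDerivation_eq_mul hq h k
  rw [hk, one_mul] at hsq
  calc q = pderiv k q ^ 2 + ℓ * pderiv k q := by rw [hsq, CharTwo.add_cancel_right]
    _ = pderiv k q * (pderiv k q + ℓ) := by ring

lemma exists_eq_sq_of_bocksteinDerivation_eq_zero (hq : q.IsHomogeneous 2)
    (h : bocksteinDerivation σ q = 0) :
    ∃ u : MvPolynomial σ (ZMod 2), u.IsHomogeneous 1 ∧ q = u ^ 2 := by
  refine exists_isHomogeneous_eq_pow_of_pderiv_eq_zero hq fun k => ?_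
  have hsq : pderiv k q ^ 2 = 0 := by
    simpa using sq_pderiv_eq_of_bocksteinDerivation_eq_mul (ℓ := 0) hq (by rw [h, zero_mul]) k
  exact pow_eq_zero_iff two_ne_zero |>.1 hsq

lemma exists_pderiv_eq_one_of_isHomogeneous_one (hℓ : ℓ.IsHomogeneous 1) (hℓ₀ : ℓ ≠ 0) :
    ∃ k, pderiv k ℓ = 1 := by
  obtain ⟨k, hk⟩ := exists_coeff_single_ne_zero_of_isHomogeneous_one hℓ hℓ₀
  have hcoeff : coeff (Finsupp.single k 1) ℓ = (1 : ZMod 2) := Fin.eq_one_of_ne_zero _ hk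
  exact ⟨k, by rw [pderiv_eq_C_of_isHomogeneous_one hℓ, hcoeff, C_1]⟩

lemma exists_eq_mul_of_dvd_bocksteinDerivation (hq : q.IsHomogeneous 2)
    (h : q ∣ bocksteinDerivation σ q) :
    ∃ u v : MvPolynomial σ (ZMod 2), u.IsHomogeneous 1 ∧ v.IsHomogeneous 1 ∧ q = u * v := by
  obtain ⟨ℓ, hℓ, hmul⟩ : ∃ ℓ : MvPolynomial σ (ZMod 2),
      ℓ.IsHomogeneous 1 ∧ bocksteinDerivation σ q = ℓ * q :=
    exists_isHomogeneous_eq_mul_of_dvd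
      (add_comm 2 1 ▸ isHomogeneous_bocksteinDerivation hq) hq h
  rcases eq_or_ne ℓ 0 with rfl | hℓ₀
  · obtain ⟨u, hu, rfl⟩ := exists_eq_sq_of_bocksteinDerivation_eq_zero hq (by rw [hmul, zero_mul])
    exact ⟨u, u, hu, hu, sq u⟩
  · obtain ⟨k, hk⟩ := exists_pderiv_eq_one_of_isHomogeneous_one hℓ hℓ₀
    exact ⟨pderiv k q, pderiv k q + ℓ, hq.pderiv, hq.pderiv.add hℓ,
      eq_mul_of_bocksteinDerivation_eq_mul_of_pderiv_eq_one hq hmul hk⟩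

end Bockstein

theorem quadratic_reducible_iff_bockstein_multiple_general {σ : Type*}
    (q : MvPolynomial σ (ZMod 2)) (hq : q.IsHomogeneous 2) :
    ((∃ u v : MvPolynomial σ (ZMod 2),
        u.IsHomogeneous 1 ∧ v.IsHomogeneous 1 ∧ q = u * v) ↔ q ∣ bocksteinDerivation σ q) ∧
    (∀ u v : MvPolynomial σ (ZMod 2), u.IsHomogeneous 1 → v.IsHomogeneous 1 → q = u * v →
      bocksteinDerivation σ q = (u + v) * q) := by
  have hmul : ∀ u v : MvPolynomial σ (ZMod 2), u.IsHomogeneous 1 → v.IsHomogeneous 1 →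
      q = u * v → bocksteinDerivation σ q = (u + v) * q := by
    rintro u v hu hv rfl
    exact bocksteinDerivation_mul_eq hu hv
  refine ⟨⟨?_, exists_eq_mul_of_dvd_bocksteinDerivation hq⟩, hmul⟩
  rintro ⟨u, v, hu, hv, huv⟩
  exact Dvd.intro_left _ (hmul u v hu hv huv).symm

/-- A homogeneous quadratic polynomial `q` over `F₂` is a product of two
homogeneous linear forms iff `β(q) = ℓ·q` for some homogeneous linear form `ℓ`; moreover
if `q = uv` with `u, v` linear then `β(q) = (u+v)·q`. -/
theorem quadratic_reducible_iff_bockstein_multiple {m : ℕ}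
    (q : MvPolynomial (Fin m) (ZMod 2)) (hq : q.IsHomogeneous 2) :
    ((∃ u v : MvPolynomial (Fin m) (ZMod 2),
        u.IsHomogeneous 1 ∧ v.IsHomogeneous 1 ∧ q = u * v) ↔
      (∃ ℓ : MvPolynomial (Fin m) (ZMod 2), ℓ.IsHomogeneous 1 ∧ bockstein q = ℓ * q)) ∧
    (∀ u v : MvPolynomial (Fin m) (ZMod 2),
      u.IsHomogeneous 1 → v.IsHomogeneous 1 → q = u * v → bockstein q = (u + v) * q) := by
  simp only [bockstein_eq_bocksteinDerivation]
  obtain ⟨hiff, hmul⟩ := quadratic_reducible_iff_bockstein_multiple_general q hq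
  exact ⟨⟨fun ⟨u, v, hu, hv, huv⟩ => ⟨u + v, hu.add hv, hmul u v hu hv huv⟩,
    fun ⟨ℓ, _, hℓ⟩ => hiff.2 (Dvd.intro_left ℓ hℓ.symm)⟩, hmul⟩
end
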